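/- arXiv:1511.05384 — 6 statements merged into one kernel-verified Lean document; each statement's English description precedes it below -/
import Mathlib

section
/- Let C_n denote the cycle graph on n vertices (n ≥ 3) and let k be an integer with 1 ≤ k ≤ n. Then ψ_k(C_n) = ⌈n/k⌉. -/
/-- `S` is a `k`-path vertex cover of `G`: every path in `G` on `k` vertices
(i.e. whose support has `k` vertices) contains at least one vertex of `S`. -/
def SimpleGraph.IsPathVertexCover {V : Type*} (G : SimpleGraph V) (k : ℕ) (S : Set V) : Prop :=
  ∀ ⦃u w : V⦄ (p : G.Walk u w), p.IsPath → p.support.length = k → ∃ x ∈ p.support, x ∈ S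

/-- `ψ_k(G)`: the minimum cardinality of a `k`-path vertex cover of `G`. -/
noncomputable def SimpleGraph.pathNum {V : Type*} [Fintype V] (G : SimpleGraph V) (k : ℕ) : ℕ :=
  sInf {m : ℕ | ∃ S : Finset V, G.IsPathVertexCover k ↑S ∧ S.card = m}

/-!
Lower bound: the translates of a single path on `k` vertices all meet a cover `S`. If the path has
vertex set `P`, the translate by `g` meets `S` exactly when `g ∈ -P + S`, so `n ≤ k * |S|`.

Upper bound: the multiples of `k` form a cover. The vertex `0` is one of them, so removing them
leaves no edge that wraps around, and every remaining component lies strictly between two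
consecutive multiples of `k`, hence has fewer than `k` vertices.
-/

open SimpleGraph
open scoped Finset Pointwise

section PathVertexCover

variable {V : Type*} {G : SimpleGraph V} {k : ℕ} {S : Set V}

theorem isPathVertexCover_univ : G.IsPathVertexCover k Set.univ :=
  fun u _ p _ _ ↦ ⟨u, p.start_mem_support, Set.mem_univ u⟩

theorem eq_of_mem_support_of_forall_adj_eq {α : Type*} {f : V → α} {u w : V} (p : G.Walk u w)
    (hp : ∀ x ∈ p.support, x ∉ S) (hf : ∀ x y, G.Adj x y → x ∉ S → y ∉ S → f x = f y) :
    ∀ x ∈ p.support, f x = f u := by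
  induction p with
  | nil => simp
  | cons hadj p ih =>
    simp only [Walk.support_cons, List.forall_mem_cons] at hp ⊢
    have hstep := hf _ _ hadj hp.1 (hp.2 _ p.start_mem_support)
    exact ⟨trivial, fun x hx ↦ (ih hp.2 x hx).trans hstep.symm⟩

theorem isPathVertexCover_of_encard_fiber_lt {α : Type*} {f : V → α}
    (hf : ∀ x y, G.Adj x y → x ∉ S → y ∉ S → f x = f y)
    (hcard : ∀ a, {x | x ∉ S ∧ f x = a}.encard < k) : G.IsPathVertexCover k S := by
  classical
  intro u w p hp hlen
  by_contra! havoid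
  have hsub : ↑p.support.toFinset ⊆ {x | x ∉ S ∧ f x = f u} := fun x hx ↦ by
    rw [Finset.mem_coe, List.mem_toFinset] at hx
    exact ⟨havoid x hx, eq_of_mem_support_of_forall_adj_eq p havoid hf x hx⟩
  refine (hcard (f u)).not_ge ?_
  calc (k : ℕ∞) = (p.support.toFinset : Set V).encard := by
        rw [Set.encard_coe_eq_coe_finsetCard, List.toFinset_card_of_nodup hp.support_nodup, hlen]
    _ ≤ {x | x ∉ S ∧ f x = f u}.encard := Set.encard_le_encard hsub

variable [Fintype V]

theorem pathNum_le_card {T : Finset V} (hT : G.IsPathVertexCover k T) : G.pathNum k ≤ #T :=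
  Nat.sInf_le ⟨T, hT, rfl⟩

theorem exists_isPathVertexCover_card_eq_pathNum (G : SimpleGraph V) (k : ℕ) :
    ∃ S : Finset V, G.IsPathVertexCover k S ∧ #S = G.pathNum k := by
  have huniv : G.IsPathVertexCover k ↑(Finset.univ : Finset V) := by
    simpa using isPathVertexCover_univ
  exact Nat.sInf_mem (s := {m | ∃ S : Finset V, G.IsPathVertexCover k S ∧ #S = m})
    ⟨_, _, huniv, rfl⟩

end PathVertexCover

section Circulant

variable {Γ : Type*} [AddGroup Γ] [Fintype Γ]

theorem card_le_card_mul_card_of_forall_exists_add_mem {A B : Finset Γ}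
    (h : ∀ g, ∃ a ∈ A, a + g ∈ B) : Fintype.card Γ ≤ #A * #B := by
  classical
  have hcover : -A + B = Finset.univ := by
    refine Finset.eq_univ_of_forall fun g ↦ ?_
    obtain ⟨a, ha, hag⟩ := h g
    exact Finset.mem_add.2 ⟨-a, Finset.neg_mem_neg ha, a + g, hag, neg_add_cancel_left a g⟩
  calc Fintype.card Γ = #(-A + B) := by rw [hcover, Finset.card_univ]
    _ ≤ #(-A) * #B := Finset.card_add_le
    _ = #A * #B := by rw [Finset.card_neg]

theorem card_le_mul_pathNum_circulantGraph {s : Set Γ} {u w : Γ}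
    {p : (circulantGraph s).Walk u w} (hp : p.IsPath) :
    Fintype.card Γ ≤ p.support.length * (circulantGraph s).pathNum p.support.length := by
  classical
  obtain ⟨S, hS, hcard⟩ :=
    exists_isPathVertexCover_card_eq_pathNum (circulantGraph s) p.support.length
  rw [← hcard, ← List.toFinset_card_of_nodup hp.support_nodup]
  refine card_le_card_mul_card_of_forall_exists_add_mem fun g ↦ ?_
  let translate : circulantGraph s →g circulantGraph s :=
    ⟨(· + g), circulantGraph_adj_translate.2⟩
  have htranslate : (p.map translate).IsPath := hp.map (add_left_injective g)
  obtain ⟨x, hx, hxS⟩ := hS _ htranslate (by simp)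
  rw [Walk.support_map, List.mem_map] at hx
  obtain ⟨a, ha, rfl⟩ := hx
  exact ⟨a, List.mem_toFinset.2 ha, hxS⟩

end Circulant

section Cycle

variable {n k : ℕ}

theorem exists_isPath_cycleGraph_support_length_eq (hn : 3 ≤ n) (hk1 : 1 ≤ k) (hk2 : k ≤ n) :
    ∃ (u w : Fin n) (p : (cycleGraph n).Walk u w), p.IsPath ∧ p.support.length = k := by
  obtain ⟨m, rfl⟩ := Nat.exists_eq_add_of_le' hn
  have hlen : (cycleGraph.cycle m).tail.length = m + 2 := by simp
  refine ⟨_, _, _, cycleGraph.isPath_tail_cycle.take (k - 1), ?_⟩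
  rw [Walk.length_support, Walk.take_length, hlen]
  omega

theorem le_mul_pathNum_cycleGraph (hn : 3 ≤ n) (hk1 : 1 ≤ k) (hk2 : k ≤ n) :
    n ≤ k * (cycleGraph n).pathNum k := by
  have hpath := exists_isPath_cycleGraph_support_length_eq hn hk1 hk2
  obtain ⟨m, rfl⟩ : ∃ m, n = m + 1 := Nat.exists_eq_add_of_le' (by omega)
  rw [cycleGraph_eq_circulantGraph] at hpath ⊢
  obtain ⟨u, w, p, hp, rfl⟩ := hpath
  simpa only [Fintype.card_fin] using card_le_mul_pathNum_circulantGraph hp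

theorem val_eq_val_add_one_of_val_sub_eq_one {u v : Fin n} (h : (u - v).val = 1) (hu : u.val ≠ 0) :
    u.val = v.val + 1 := by
  rcases le_or_gt v u with hle | hlt
  · have := Fin.coe_sub_iff_le.2 hle
    omega
  · have := Fin.coe_sub_iff_lt.2 hlt
    omega

theorem pathGraph_adj_of_cycleGraph_adj {u v : Fin n} (h : (cycleGraph n).Adj u v)
    (hu : u.val ≠ 0) (hv : v.val ≠ 0) : (pathGraph n).Adj u v := by
  rw [pathGraph_adj]
  rcases cycleGraph_adj'.1 h with h | h
  · exact Or.inr (val_eq_val_add_one_of_val_sub_eq_one h hu).symm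
  · exact Or.inl (val_eq_val_add_one_of_val_sub_eq_one h hv).symm

theorem div_eq_div_of_pathGraph_adj {u v : Fin n} (h : (pathGraph n).Adj u v)
    (hu : ¬k ∣ u.val) (hv : ¬k ∣ v.val) : u.val / k = v.val / k := by
  rcases pathGraph_adj.1 h with h | h
  · rw [← h] at hv ⊢
    exact (Nat.succ_div_of_not_dvd hv).symm
  · rw [← h] at hu ⊢
    exact Nat.succ_div_of_not_dvd hu

theorem encard_setOf_not_dvd_and_div_eq_lt (hk : 0 < k) (a : ℕ) :
    {i : ℕ | ¬k ∣ i ∧ i / k = a}.encard < k := by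
  have hsub : {i : ℕ | ¬k ∣ i ∧ i / k = a} ⊆ Finset.Ioo (k * a) (k * a + k) := by
    rintro i ⟨hi, rfl⟩
    rw [Finset.mem_coe, Finset.mem_Ioo]
    refine ⟨(Nat.mul_div_le i k).lt_of_ne fun h ↦ hi ⟨_, h.symm⟩, ?_⟩
    exact Nat.lt_mul_div_succ i hk
  refine (Set.encard_le_encard hsub).trans_lt ?_
  rw [Set.encard_coe_eq_coe_finsetCard, Nat.card_Ioo, Nat.cast_lt]
  omega

theorem isPathVertexCover_cycleGraph_setOf_dvd (hk : 0 < k) :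
    (cycleGraph n).IsPathVertexCover k {v | k ∣ v.val} := by
  refine isPathVertexCover_of_encard_fiber_lt (f := fun v ↦ v.val / k) ?_ fun a ↦ ?_
  · have val_ne_zero {x : Fin n} (hx : ¬k ∣ x.val) : x.val ≠ 0 := fun h ↦ hx (h ▸ dvd_zero k)
    exact fun x y hadj hx hy ↦ div_eq_div_of_pathGraph_adj
      (pathGraph_adj_of_cycleGraph_adj hadj (val_ne_zero hx) (val_ne_zero hy)) hx hy
  · calc {x : Fin n | ¬k ∣ x.val ∧ x.val / k = a}.encard
        ≤ {i : ℕ | ¬k ∣ i ∧ i / k = a}.encard :=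
          Set.encard_le_encard_of_injOn (fun _ hx ↦ hx) Fin.val_injective.injOn
      _ < k := encard_setOf_not_dvd_and_div_eq_lt hk a

theorem card_filter_dvd_val (hk : 0 < k) : #{v : Fin n | k ∣ v.val} = n ⌈/⌉ k := by
  cases n with
  | zero => simp
  | succ m =>
    have hpos : #{v : Fin m | k ∣ v.val + 1} = m / k := by
      rw [← Nat.card_multiples, Finset.card_filter, Finset.card_filter,
        Fin.sum_univ_eq_sum_range (fun i ↦ if k ∣ i + 1 then 1 else 0)]
    rw [Fin.card_filter_univ_succ, Nat.ceilDiv_eq_add_pred_div, Nat.add_right_comm,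
      Nat.add_sub_cancel, Nat.add_div_right m hk]
    simp [hpos]

end Cycle

theorem psi_cycleGraph (n k : ℕ) (hn : 3 ≤ n) (hk1 : 1 ≤ k) (hk2 : k ≤ n) :
    (SimpleGraph.cycleGraph n).pathNum k = (n + k - 1) / k := by
  rw [← Nat.ceilDiv_eq_add_pred_div]
  apply le_antisymm
  · rw [← card_filter_dvd_val hk1]
    apply pathNum_le_card
    simpa using isPathVertexCover_cycleGraph_setOf_dvd hk1
  · exact (ceilDiv_le_iff_le_mul hk1).2 (le_mul_pathNum_cycleGraph hn hk1 hk2)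
end

section
/- Let a, b be positive integers and let K_{a,b} denote the complete bipartite graph with parts of sizes a and b. For any integer k with 1 ≤ k ≤ a + b: ψ_k(K_{a,b}) = a + b if k = 1; ψ_k(K_{a,b}) = min{a,b} − ⌊k/2⌋ + 1 if 1 < k ≤ 2·min{a,b} + 1; and ψ_k(K_{a,b}) = 0 otherwise. -/
/-!
The two sides of a bipartite graph alternate along any walk, so a path on `k` vertices has at least
`k / 2` vertices on each side. Conversely, in a complete bipartite graph one can walk greedily from
side to side, so a vertex set contains a path on `k` vertices as soon as it has at least `k`
vertices in total and at least `k / 2` on each side. Hence a set is a `k`-path vertex cover exactly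
when its complement fails one of these conditions. If `2 ≤ k`, the cheapest way to fail one of them
is to cover all but `k / 2 - 1` vertices of one side, or all but `k - 1` vertices of the graph.
-/

open Finset SimpleGraph

namespace PathVertexCover

variable {V : Type*} {G : SimpleGraph V} {k : ℕ}

section Cover

variable [Fintype V]

theorem exists_isPathVertexCover_card_eq_pathNum (G : SimpleGraph V) (k : ℕ) :
    ∃ S : Finset V, G.IsPathVertexCover k S ∧ #S = G.pathNum k :=
  Nat.sInf_mem (s := {m | ∃ S : Finset V, G.IsPathVertexCover k S ∧ #S = m})
    ⟨_, univ, fun u _ p _ _ => ⟨u, p.start_mem_support, by simp⟩, rfl⟩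

theorem pathNum_le_card {S : Finset V} (hS : G.IsPathVertexCover k S) : G.pathNum k ≤ #S :=
  Nat.sInf_le ⟨S, hS, rfl⟩

theorem pathNum_one (G : SimpleGraph V) : G.pathNum 1 = Fintype.card V := by
  obtain ⟨S, hS, hcard⟩ := exists_isPathVertexCover_card_eq_pathNum G 1
  have hmem (v : V) : v ∈ S := by simpa using hS (.nil : G.Walk v v) .nil rfl
  rw [← hcard, eq_univ_of_forall hmem, card_univ]

theorem isPathVertexCover_iff_not_support_subset_compl [DecidableEq V] {S : Finset V} :
    G.IsPathVertexCover k S ↔ ∀ ⦃u w : V⦄ (p : G.Walk u w), p.IsPath → p.support.length = k →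
      ¬p.support.toFinset ⊆ Sᶜ := by
  simp [IsPathVertexCover, subset_iff]

theorem isPathVertexCover_of_card_compl_lt [DecidableEq V] {S : Finset V} (hS : #Sᶜ < k) :
    G.IsPathVertexCover k S := by
  refine isPathVertexCover_iff_not_support_subset_compl.2 fun u w p hp hk hsub => ?_
  have hle : k ≤ #Sᶜ := calc
    k = #p.support.toFinset := by rw [List.toFinset_card_of_nodup hp.support_nodup, hk]
    _ ≤ #Sᶜ := card_le_card hsub
  omega

theorem pathNum_le_card_add_one_sub (G : SimpleGraph V) (hk : 1 ≤ k) :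
    G.pathNum k ≤ Fintype.card V + 1 - k := by
  classical
  obtain ⟨S, -, hcard⟩ := exists_subset_card_eq (s := (univ : Finset V))
    (n := Fintype.card V + 1 - k) (by rw [card_univ]; omega)
  rw [← hcard]
  refine pathNum_le_card (isPathVertexCover_of_card_compl_lt ?_)
  rw [card_compl]
  omega

end Cover

section Coloring

theorem count_map_support (c : G.Coloring Bool) {u w : V} (p : G.Walk u w) (b : Bool) :
    (p.support.map c).count b = (p.support.length + if c u = b then 1 else 0) / 2 := by
  induction p with
  | @nil u => by_cases h : c u = b <;> simp [h]
  | @cons u v _ h p ih =>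
    have hv : c v = !c u := Bool.eq_not.2 (c.valid h).symm
    simp only [Walk.support_cons, List.map_cons, List.count_cons, ih, List.length_cons, beq_iff_eq,
      hv]
    cases c u <;> cases b <;> simp <;> omega

theorem half_length_le_card_filter_support [DecidableEq V] (c : G.Coloring Bool) {u w : V}
    {p : G.Walk u w} (hp : p.IsPath) (b : Bool) :
    p.support.length / 2 ≤ #{v ∈ p.support.toFinset | c v = b} := by
  have hcount : #{v ∈ p.support.toFinset | c v = b} = (p.support.map c).count b := by
    rw [List.count, List.countP_map, List.countP_eq_length_filter,
      ← List.toFinset_card_of_nodup (hp.support_nodup.filter _), List.toFinset_filter]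
    simp
  rw [hcount, count_map_support]
  omega

theorem exists_isPath_of_forall_adj [DecidableEq V] {c : V → Bool}
    (hc : ∀ u v, c u ≠ c v → G.Adj u v) (n : ℕ) (b : Bool) (F : Finset V)
    (hsame : (n + 2) / 2 ≤ #{v ∈ F | c v = b})
    (hopp : (n + 1) / 2 ≤ #{v ∈ F | c v = !b}) :
    ∃ (u w : V) (p : G.Walk u w),
      c u = b ∧ p.IsPath ∧ p.length = n ∧ p.support.toFinset ⊆ F := by
  induction n generalizing b F with
  | zero =>
    obtain ⟨u, hu⟩ := card_pos.1 (hsame.trans_lt' (by omega))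
    obtain ⟨huF, hub⟩ := mem_filter.1 hu
    exact ⟨u, u, .nil, hub, .nil, rfl, by simpa using huF⟩
  | succ n ih =>
    obtain ⟨u, hu⟩ := card_pos.1 (hsame.trans_lt' (by omega))
    obtain ⟨huF, hub⟩ := mem_filter.1 hu
    have herase : #{v ∈ F.erase u | c v = b} = #{v ∈ F | c v = b} - 1 := by
      rw [filter_erase, card_erase_of_mem hu]
    have herase' : #{v ∈ F.erase u | c v = !b} = #{v ∈ F | c v = !b} := by
      rw [filter_erase, erase_eq_of_notMem (by simp [hub])]
    obtain ⟨v, w, p, hv, hp, hlen, hsub⟩ :=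
      ih (!b) (F.erase u) (by omega) (by rw [Bool.not_not]; omega)
    have hup : u ∉ p.support := fun h => by simpa using hsub (List.mem_toFinset.2 h)
    refine ⟨u, w, .cons (hc u v (by simp [hub, hv])) p, hub, hp.cons hup, by simp [hlen], ?_⟩
    rw [Walk.support_cons, List.toFinset_cons]
    exact insert_subset huF (hsub.trans (erase_subset u F))

variable [Fintype V]

theorem isPathVertexCover_of_card_filter_compl_lt [DecidableEq V] (c : G.Coloring Bool) (b : Bool)
    {S : Finset V} (hS : #{v ∈ Sᶜ | c v = b} < k / 2) : G.IsPathVertexCover k S := by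
  refine isPathVertexCover_iff_not_support_subset_compl.2 fun u w p hp hk hsub => ?_
  have hle : k / 2 ≤ #{v ∈ Sᶜ | c v = b} := calc
    k / 2 ≤ #{v ∈ p.support.toFinset | c v = b} := hk ▸ half_length_le_card_filter_support c hp b
    _ ≤ #{v ∈ Sᶜ | c v = b} := card_le_card (filter_subset_filter _ hsub)
  omega

theorem filter_compl_eq_filter_sdiff [DecidableEq V] (p : V → Prop) [DecidablePred p]
    (S : Finset V) :
    ({v ∈ Sᶜ | p v} : Finset V) = ({v | p v} : Finset V) \ S := by
  ext; simp [and_comm]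

theorem pathNum_le_card_filter_add_one_sub (c : G.Coloring Bool) (b : Bool) (hk : 2 ≤ k) :
    G.pathNum k ≤ #{v | c v = b} + 1 - k / 2 := by
  classical
  obtain ⟨S, hS, hcard⟩ := exists_subset_card_eq (s := ({v | c v = b} : Finset V))
    (n := #{v | c v = b} + 1 - k / 2) (by omega)
  rw [← hcard]
  refine pathNum_le_card (isPathVertexCover_of_card_filter_compl_lt c b ?_)
  rw [filter_compl_eq_filter_sdiff, card_sdiff_of_subset hS]
  omega

theorem isPathVertexCover_iff_of_forall_adj [DecidableEq V] (c : G.Coloring Bool)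
    (hc : ∀ u v, c u ≠ c v → G.Adj u v) (hk : 1 ≤ k) {S : Finset V} :
    G.IsPathVertexCover k S ↔ (∃ b, #{v ∈ Sᶜ | c v = b} < k / 2) ∨ #Sᶜ < k := by
  refine ⟨fun hS => ?_, ?_⟩
  · by_contra! h
    obtain ⟨hside, htotal⟩ := h
    have hsum : #{v ∈ Sᶜ | c v = true} + #{v ∈ Sᶜ | c v = false} = #Sᶜ := by
      simpa using card_filter_add_card_filter_not (s := Sᶜ) (c · = true)
    -- For odd `k` the path must start on a side with at least `k / 2 + 1` uncovered vertices.
    obtain ⟨b, hstart⟩ : ∃ b, (k + 1) / 2 ≤ #{v ∈ Sᶜ | c v = b} := by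
      by_contra! hlt
      have := hlt true
      have := hlt false
      omega
    obtain ⟨u, w, p, -, hp, hlen, hsub⟩ := exists_isPath_of_forall_adj hc (k - 1) b Sᶜ
      (by omega) (by have := hside (!b); omega)
    exact isPathVertexCover_iff_not_support_subset_compl.1 hS p hp
      (by rw [Walk.length_support]; omega) hsub
  · rintro (⟨b, hb⟩ | hlt)
    · exact isPathVertexCover_of_card_filter_compl_lt c b hb
    · exact isPathVertexCover_of_card_compl_lt hlt

theorem pathNum_eq_min_of_forall_adj (c : G.Coloring Bool) (hc : ∀ u v, c u ≠ c v → G.Adj u v)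
    (hk : 2 ≤ k) :
    G.pathNum k = min (min #{v | c v = false} #{v | c v = true} + 1 - k / 2)
      (Fintype.card V + 1 - k) := by
  classical
  refine le_antisymm ?_ ?_
  · have htrue := pathNum_le_card_filter_add_one_sub c true hk
    have hfalse := pathNum_le_card_filter_add_one_sub c false hk
    have htotal := pathNum_le_card_add_one_sub G (k := k) (by omega)
    omega
  · obtain ⟨S, hS, hcard⟩ := exists_isPathVertexCover_card_eq_pathNum G k
    rw [← hcard]
    rcases (isPathVertexCover_iff_of_forall_adj c hc (by omega)).1 hS with ⟨b, hb⟩ | hlt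
    · have hcompl : #{v | c v = b} - #S ≤ #{v ∈ Sᶜ | c v = b} := by
        rw [filter_compl_eq_filter_sdiff]
        exact le_card_sdiff _ _
      cases b <;> omega
    · rw [card_compl] at hlt
      omega

end Coloring

section CompleteBipartiteGraph

open CompleteBipartiteGraph

variable {α β : Type*}

theorem bicoloring_apply (v : α ⊕ β) : bicoloring α β v = v.isRight := rfl

theorem adj_of_bicoloring_ne (u v : α ⊕ β) (h : bicoloring α β u ≠ bicoloring α β v) :
    (completeBipartiteGraph α β).Adj u v := by
  rcases u with x | x <;> rcases v with y | y <;> simp [bicoloring_apply] at h ⊢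

variable [Fintype α] [Fintype β]

theorem card_filter_bicoloring_eq_false : #{v | bicoloring α β v = false} = Fintype.card α := by
  rw [card_filter, Fintype.sum_sum_type]
  simp [bicoloring_apply]

theorem card_filter_bicoloring_eq_true : #{v | bicoloring α β v = true} = Fintype.card β := by
  rw [card_filter, Fintype.sum_sum_type]
  simp [bicoloring_apply]

end CompleteBipartiteGraph

end PathVertexCover

open PathVertexCover

-- The second argument of the outer `min` is the smaller one only if both sides have `k / 2`
-- vertices and `k` is odd; then `k` exceeds the number of vertices by one.
theorem psi_completeBipartiteGraph_general {α β : Type*} [Fintype α] [Fintype β] {k : ℕ}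
    (hk : 1 ≤ k) :
    (completeBipartiteGraph α β).pathNum k =
      if k = 1 then Fintype.card α + Fintype.card β
      else min (min (Fintype.card α) (Fintype.card β) + 1 - k / 2)
        (Fintype.card α + Fintype.card β + 1 - k) := by
  split_ifs with hk1
  · rw [hk1, pathNum_one, Fintype.card_sum]
  · rw [pathNum_eq_min_of_forall_adj _ adj_of_bicoloring_ne (by omega),
      card_filter_bicoloring_eq_false, card_filter_bicoloring_eq_true, Fintype.card_sum]

theorem psi_completeBipartiteGraph (a b : ℕ) (ha : 1 ≤ a) (hb : 1 ≤ b)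
    (k : ℕ) (hk1 : 1 ≤ k) (hk2 : k ≤ a + b) :
    (k = 1 → (completeBipartiteGraph (Fin a) (Fin b)).pathNum k = a + b) ∧
    (1 < k → k ≤ 2 * min a b + 1 →
      (completeBipartiteGraph (Fin a) (Fin b)).pathNum k = min a b - k / 2 + 1) ∧
    (2 * min a b + 1 < k → (completeBipartiteGraph (Fin a) (Fin b)).pathNum k = 0) := by
  simp only [psi_completeBipartiteGraph_general hk1, Fintype.card_fin]
  grind
end

section
/- Let k be a positive integer. For every finite simple graph H = (W,F) there exists a finite simple graph G containing W among its vertices such that the subgraph of G induced on W is isomorphic to H and W is a k-path vertex cover of G of minimum cardinality (i.e., W is a k-PVC of G and ψ_k(G) = |W|). -/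
/-!
Root a copy of the complete graph on `k` vertices at every vertex of `H`. A path that misses all
the roots can never leave the copy it starts in, and so has at most `k - 1` vertices: the roots
form a `k`-path vertex cover. Conversely, each copy has a Hamiltonian path, which is a path on `k`
vertices, so a cover contains a vertex of each of these disjoint copies.
-/

open SimpleGraph

section PathVertexCover

variable {U V : Type*} {K : SimpleGraph U} {G : SimpleGraph V} {k : ℕ}

theorem isPathVertexCover_preimage {S : Set V} (hS : G.IsPathVertexCover k S) (f : K →g G)
    (hf : Function.Injective f) : K.IsPathVertexCover k (f ⁻¹' S) := by
  intro u v p hp hlen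
  obtain ⟨x, hx, hxS⟩ := hS (p.map f) (hp.map hf) (by simpa using hlen)
  rw [Walk.support_map, List.mem_map] at hx
  obtain ⟨y, hy, rfl⟩ := hx
  exact ⟨y, hy, hxS⟩

theorem isPathVertexCover_card_of_nonempty [Fintype U] (K : SimpleGraph U) {S : Set U}
    (hS : S.Nonempty) : K.IsPathVertexCover (Fintype.card U) S := by
  classical
  intro u v p hp hlen
  have hp_ham : p.IsHamiltonian :=
    Walk.isHamiltonian_iff_isPath_and_length_eq.2 ⟨hp, by simp [← hlen]⟩
  obtain ⟨x, hx⟩ := hS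
  exact ⟨x, hp_ham.mem_support x, hx⟩

theorem not_isPathVertexCover_top_card_empty [Fintype U] [Nonempty U] :
    ¬ (⊤ : SimpleGraph U).IsPathVertexCover (Fintype.card U) ∅ := by
  intro h
  have hne : (Finset.univ : Finset U).toList ≠ [] := by simp [Finset.univ_nonempty.ne_empty]
  have hnodup := (Finset.univ : Finset U).nodup_toList
  let p := Walk.ofSupport (G := ⊤) _ hne (List.Pairwise.isChain hnodup)
  have hp : p.support = Finset.univ.toList := Walk.support_ofSupport _ _
  obtain ⟨x, -, hx⟩ := h p (p.isPath_def.2 (by rwa [hp])) (by simp [hp])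
  exact hx

end PathVertexCover

/-- The rooted product of `H` with the graph `K` rooted at `r`: a copy `{w} × K` of `K` for every
vertex `w` of `H`, with a copy of `H` placed on the roots `(w, r)`. -/
def rootedProduct {W U : Type*} (H : SimpleGraph W) (K : SimpleGraph U) (r : U) :
    SimpleGraph (W × U) where
  Adj x y := (x.1 = y.1 ∧ K.Adj x.2 y.2) ∨ (x.2 = r ∧ y.2 = r ∧ H.Adj x.1 y.1)
  symm := ⟨fun _ _ => Or.imp (fun ⟨h₁, h₂⟩ => ⟨h₁.symm, h₂.symm⟩)
    fun ⟨h₁, h₂, h₃⟩ => ⟨h₂, h₁, h₃.symm⟩⟩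
  loopless := ⟨fun _ h => h.elim (fun ⟨_, h⟩ => K.irrefl h) fun ⟨_, _, h⟩ => H.irrefl h⟩

namespace rootedProduct

variable {W U : Type*} (H : SimpleGraph W) (K : SimpleGraph U) (r : U)

/-- The embedding of `H` into the rooted product as the graph induced on the roots. -/
def rootEmbedding : H ↪g rootedProduct H K r where
  toFun w := (w, r)
  inj' := Prod.mk_left_injective r
  map_rel_iff' := by simp [rootedProduct]

/-- The embedding of `K` into the rooted product as the copy rooted at the vertex `w` of `H`. -/
def copyEmbedding (w : W) : K ↪g rootedProduct H K r where
  toFun u := (w, u)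
  inj' := Prod.mk_right_injective w
  map_rel_iff' := by simp [rootedProduct]

variable {H K r} {k : ℕ}

theorem exists_walk_support_eq_map_of_snd_ne {x y : W × U} (p : (rootedProduct H K r).Walk x y)
    (hp : ∀ z ∈ p.support, z.2 ≠ r) :
    ∃ q : K.Walk x.2 y.2, p.support = q.support.map (Prod.mk x.1) := by
  induction p with
  | nil => exact ⟨.nil, by simp⟩
  | cons h p ih =>
    rw [Walk.support_cons] at hp ⊢
    rw [List.forall_mem_cons] at hp
    obtain ⟨hx, hp⟩ := hp
    obtain ⟨q, hq⟩ := ih hp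
    rcases h with ⟨hfst, hadj⟩ | ⟨hroot, -⟩
    · exact ⟨.cons hadj q, by simp [hq, ← hfst]⟩
    · exact absurd hroot hx

theorem isPathVertexCover_range_rootEmbedding (hK : K.IsPathVertexCover k {r}) :
    (rootedProduct H K r).IsPathVertexCover k (Set.range (rootEmbedding H K r)) := by
  intro x y p hp hlen
  by_contra! havoid
  obtain ⟨q, hq⟩ := exists_walk_support_eq_map_of_snd_ne p
    fun z hz hzr => havoid z hz ⟨z.1, Prod.ext rfl hzr.symm⟩
  have hq_path : q.IsPath := q.isPath_def.2 (List.Nodup.of_map _ (hq ▸ hp.support_nodup))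
  obtain ⟨u, hu, rfl⟩ := hK q hq_path (by simpa [hq] using hlen)
  exact havoid (x.1, u) (hq ▸ List.mem_map_of_mem hu) ⟨x.1, rfl⟩

theorem surjOn_fst_of_isPathVertexCover (hK : ¬ K.IsPathVertexCover k ∅) {S : Set (W × U)}
    (hS : (rootedProduct H K r).IsPathVertexCover k S) : Set.SurjOn Prod.fst S Set.univ := by
  intro w _
  let f := copyEmbedding H K r w
  have hcopy : K.IsPathVertexCover k (f ⁻¹' S) := isPathVertexCover_preimage hS f.toHom f.injective
  obtain ⟨u, hu⟩ : (f ⁻¹' S).Nonempty :=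
    Set.nonempty_iff_ne_empty.2 fun hempty => hK (hempty ▸ hcopy)
  exact ⟨(w, u), hu, rfl⟩

theorem pathNum_eq_card [Fintype W] [Fintype U] (hr : K.IsPathVertexCover k {r})
    (hK : ¬ K.IsPathVertexCover k ∅) : (rootedProduct H K r).pathNum k = Fintype.card W := by
  refine IsLeast.csInf_eq ⟨⟨Finset.univ.map (rootEmbedding H K r).toEmbedding, ?_, by simp⟩, ?_⟩
  · simpa using isPathVertexCover_range_rootEmbedding hr
  · rintro _ ⟨S, hS, rfl⟩
    refine Finset.card_le_card_of_surjOn Prod.fst ?_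
    simpa using surjOn_fst_of_isPathVertexCover hK hS

end rootedProduct

theorem exists_supergraph_min_pvc (k : ℕ) (hk : 1 ≤ k) (W : Type) [Fintype W]
    (H : SimpleGraph W) :
    ∃ (V : Type) (instV : Fintype V) (G : SimpleGraph V) (f : W ↪ V),
      Nonempty (H ≃g G.induce (Set.range f)) ∧
      G.IsPathVertexCover k (Set.range f) ∧
      @SimpleGraph.pathNum V instV G k = Fintype.card W := by
  have : NeZero k := .of_pos hk
  let K : SimpleGraph (Fin k) := ⊤
  have hroot : K.IsPathVertexCover k {0} := by
    simpa using isPathVertexCover_card_of_nonempty K (Set.singleton_nonempty 0)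
  have hK : ¬ K.IsPathVertexCover k ∅ := by
    simpa using not_isPathVertexCover_top_card_empty (U := Fin k)
  let f := rootedProduct.rootEmbedding H K 0
  exact ⟨W × Fin k, inferInstance, rootedProduct H K 0, f.toEmbedding, ⟨f.isoInduceRange⟩,
    rootedProduct.isPathVertexCover_range_rootEmbedding hroot,
    rootedProduct.pathNum_eq_card hroot hK⟩
end

section
/- For every integer n ≥ 4 there exist connected finite simple graphs G and H, each on n vertices, such that G and H are not isomorphic but ψ_k(G) = ψ_k(H) for every k with 1 ≤ k ≤ n. -/
/-!
Take a star with centre `c` and leaves including `a`, `b` and `d`. Adding the edge `ab` gives a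
graph `G`, and removing the edge `cb` from `G` gives a tree `H`, so `H` has one edge less than `G`.
Both graphs have `ψ_1 = n`. For `k ≥ 2` both have `ψ_k = ⌊4 / k⌋`: the tree `H` contains the path
`d, c, a, b`, which can be cut into `⌊4 / k⌋` disjoint paths on `k` vertices, while in `G` every
edge meets `{c, a}`, every path on three vertices contains `c`, and no path has five vertices.
-/

namespace PathSequence

open SimpleGraph

theorem length_div_le_countP {α : Type*} {p : α → Bool} {k : ℕ} (l : List α)
    (h : ∀ t, t <:+: l → t.length = k → ∃ x ∈ t, p x) : l.length / k ≤ l.countP p := by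
  induction hlen : l.length using Nat.strong_induction_on generalizing l with
  | _ m ih =>
    obtain hk | ⟨hk, hkm⟩ : (k = 0 ∨ m < k) ∨ 0 < k ∧ k ≤ m := by omega
    · simp [Nat.div_eq_zero_iff.2 hk]
    have htake : 1 ≤ (l.take k).countP p :=
      List.one_le_countP_iff.2 (h _ (l.take_prefix k).isInfix (by simp [hlen, hkm]))
    have hdrop : (m - k) / k ≤ (l.drop k).countP p :=
      ih (m - k) (by omega) _ (fun t ht => h t (ht.trans (l.drop_suffix k).isInfix))
        (by simp [hlen])
    calc m / k
        = 1 + (m - k) / k := by rw [Nat.div_eq_sub_div hk hkm, add_comm]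
      _ ≤ (l.take k).countP p + (l.drop k).countP p := add_le_add htake hdrop
      _ = l.countP p := by rw [← List.countP_append, List.take_append_drop]

section PathVertexCover

variable {V : Type*} {G H : SimpleGraph V} {j k : ℕ} {S : Set V}

theorem isPathVertexCover_univ (G : SimpleGraph V) (k : ℕ) : G.IsPathVertexCover k Set.univ :=
  fun u _ p _ _ => ⟨u, p.start_mem_support, Set.mem_univ u⟩

theorem isPathVertexCover_anti (h : H ≤ G) (hS : G.IsPathVertexCover k S) :
    H.IsPathVertexCover k S := by
  intro u w p hp hk
  simpa using hS (p.mapLe h) (hp.mapLe h) (by simpa using hk)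

theorem isPathVertexCover_iff_forall_list (hk : 1 ≤ k) :
    G.IsPathVertexCover k S ↔
      ∀ l : List V, l.IsChain G.Adj → l.Nodup → l.length = k → ∃ x ∈ l, x ∈ S := by
  refine ⟨fun hS l hchain hnodup hlen => ?_, fun hS u w p hp hlen =>
    hS p.support p.isChain_adj_support hp.support_nodup hlen⟩
  have hne : l ≠ [] := List.ne_nil_of_length_pos (by omega)
  have hsupport := Walk.support_ofSupport hne hchain
  simpa only [hsupport] using hS (Walk.ofSupport l hne hchain)
    (Walk.IsPath.mk' (by rwa [hsupport])) (by rwa [hsupport])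

theorem isPathVertexCover_of_le (hj : 1 ≤ j) (hjk : j ≤ k) (hS : G.IsPathVertexCover j S) :
    G.IsPathVertexCover k S := by
  rw [isPathVertexCover_iff_forall_list hj] at hS
  rw [isPathVertexCover_iff_forall_list (hj.trans hjk)]
  intro l hchain hnodup hlen
  obtain ⟨x, hx, hxS⟩ := hS (l.take j) (hchain.take j) (hnodup.sublist (l.take_sublist j))
    (by simp [hlen, hjk])
  exact ⟨x, List.mem_of_mem_take hx, hxS⟩

theorem isPathVertexCover_one_iff : G.IsPathVertexCover 1 S ↔ S = Set.univ := by
  rw [isPathVertexCover_iff_forall_list le_rfl, Set.eq_univ_iff_forall]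
  refine ⟨fun hS v => by simpa using hS [v] (.singleton v) (by simp) rfl, fun hS l _ _ hlen => ?_⟩
  obtain ⟨v, rfl⟩ := List.length_eq_one_iff.1 hlen
  exact ⟨v, by simp, hS v⟩

end PathVertexCover

section PathNum

variable {V : Type*} [Fintype V] {G H : SimpleGraph V} {k : ℕ}

theorem pathNum_le_card {S : Finset V} (hS : G.IsPathVertexCover k S) : G.pathNum k ≤ S.card :=
  Nat.sInf_le ⟨S, hS, rfl⟩

theorem exists_isPathVertexCover_card_eq_pathNum (G : SimpleGraph V) (k : ℕ) :
    ∃ S : Finset V, G.IsPathVertexCover k S ∧ S.card = G.pathNum k :=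
  Nat.sInf_mem (s := {m | ∃ S : Finset V, G.IsPathVertexCover k S ∧ S.card = m})
    ⟨_, Finset.univ, by simpa using isPathVertexCover_univ G k, rfl⟩

theorem pathNum_mono (h : H ≤ G) : H.pathNum k ≤ G.pathNum k := by
  obtain ⟨S, hS, hcard⟩ := exists_isPathVertexCover_card_eq_pathNum G k
  exact (pathNum_le_card (isPathVertexCover_anti h hS)).trans_eq hcard

theorem pathNum_one (G : SimpleGraph V) : G.pathNum 1 = Fintype.card V := by
  obtain ⟨S, hS, hcard⟩ := exists_isPathVertexCover_card_eq_pathNum G 1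
  rw [isPathVertexCover_one_iff, Finset.coe_eq_univ] at hS
  rw [← hcard, hS, Finset.card_univ]

theorem length_div_le_pathNum {l : List V} (hchain : l.IsChain G.Adj) (hnodup : l.Nodup) :
    l.length / k ≤ G.pathNum k := by
  classical
  obtain rfl | hk := k.eq_zero_or_pos
  · simp
  obtain ⟨S, hS, hcard⟩ := exists_isPathVertexCover_card_eq_pathNum G k
  rw [isPathVertexCover_iff_forall_list hk] at hS
  have hblock (t : List V) (ht : t <:+: l) (hlen : t.length = k) : ∃ x ∈ t, x ∈ S :=
    hS t (hchain.infix ht) (hnodup.sublist ht.sublist) hlen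
  calc l.length / k
      ≤ l.countP (· ∈ S) := length_div_le_countP l (by simpa using hblock)
    _ = (l.filter (· ∈ S)).toFinset.card := by
        rw [List.countP_eq_length_filter, List.toFinset_card_of_nodup (hnodup.filter _)]
    _ ≤ S.card := Finset.card_le_card fun x hx => by simp_all
    _ = G.pathNum k := hcard

end PathNum

theorem not_nonempty_iso_of_lt {V : Type*} [Finite V] {G H : SimpleGraph V} (h : H < G) :
    ¬ Nonempty (G ≃g H) := by
  classical
  have := Fintype.ofFinite V
  rintro ⟨e⟩
  exact (Finset.card_lt_card (edgeFinset_ssubset_edgeFinset.2 h)).ne e.card_edgeFinset_eq.symm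

section Star

variable {V : Type*} {a b c d : V}

/-- The star on `V` with centre `c`, together with the edge joining its leaves `a` and `b`. -/
def starWithTriangle (c a b : V) : SimpleGraph V :=
  starGraph c ⊔ edge a b

/-- The star on `V \ {b}` with centre `c`, together with `b` attached to the leaf `a`. It is encoded
as the star with a triangle on `c`, `a`, `b` without the edge from `c` to `b`, which makes it a
subgraph of that graph by construction. -/
def extendedStar (c a b : V) : SimpleGraph V :=
  starWithTriangle c a b \ edge c b

theorem starWithTriangle_adj {x y : V} :
    (starWithTriangle c a b).Adj x y ↔
      x ≠ y ∧ (x = c ∨ y = c ∨ s(x, y) = s(a, b)) := by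
  simp only [starWithTriangle, sup_adj, starGraph_adj, edge_adj, Sym2.eq_iff]
  tauto

theorem extendedStar_adj {x y : V} :
    (extendedStar c a b).Adj x y ↔
      (starWithTriangle c a b).Adj x y ∧ s(x, y) ≠ s(c, b) := by
  simp only [extendedStar, sdiff_adj, edge_adj, starWithTriangle_adj, ne_eq, Sym2.eq_iff]
  tauto

theorem extendedStar_lt (hcb : c ≠ b) : extendedStar c a b < starWithTriangle c a b :=
  sdiff_lt ((edge_le_iff _).2 (.inr (starWithTriangle_adj.2 ⟨hcb, .inl rfl⟩)))
    fun hbot => hcb (by simpa using (edge_le_iff ⊥).1 hbot.le)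

theorem isChain_extendedStar (h : [d, c, a, b].Nodup) :
    [d, c, a, b].IsChain (extendedStar c a b).Adj := by
  grind [extendedStar_adj, starWithTriangle_adj]

theorem connected_extendedStar (hca : c ≠ a) (hcb : c ≠ b) (hab : a ≠ b) :
    (extendedStar c a b).Connected := by
  have adj_center {v : V} (hvc : v ≠ c) (hvb : v ≠ b) : (extendedStar c a b).Adj c v := by
    grind [extendedStar_adj, starWithTriangle_adj]
  have adj_ab : (extendedStar c a b).Adj a b := by
    grind [extendedStar_adj, starWithTriangle_adj]
  rw [connected_iff_exists_forall_reachable]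
  refine ⟨c, fun v => ?_⟩
  obtain rfl | hvc := eq_or_ne v c
  · rfl
  obtain rfl | hvb := eq_or_ne v b
  · exact (adj_center hca.symm hab).reachable.trans adj_ab.reachable
  · exact (adj_center hvc hvb).reachable

theorem isPathVertexCover_two_starWithTriangle (c a b : V) :
    (starWithTriangle c a b).IsPathVertexCover 2 {c, a} := by
  rw [isPathVertexCover_iff_forall_list one_le_two]
  intro l hchain _ hlen
  obtain ⟨x, y, rfl⟩ := List.length_eq_two.1 hlen
  simp only [Set.mem_insert_iff, Set.mem_singleton_iff]
  grind [starWithTriangle_adj]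

theorem isPathVertexCover_three_starWithTriangle (c a b : V) :
    (starWithTriangle c a b).IsPathVertexCover 3 {c} := by
  rw [isPathVertexCover_iff_forall_list (by norm_num)]
  intro l hchain hnodup hlen
  obtain ⟨x, y, z, rfl⟩ := List.length_eq_three.1 hlen
  simp only [Set.mem_singleton_iff]
  by_contra! hc
  have hxy : s(x, y) = s(a, b) := by grind [starWithTriangle_adj]
  have hyz : s(y, z) = s(a, b) := by grind [starWithTriangle_adj]
  have hxz : x = z := by grind
  simp [hxz] at hnodup

theorem isPathVertexCover_five_starWithTriangle (c a b : V) :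
    (starWithTriangle c a b).IsPathVertexCover 5 ∅ := by
  rw [isPathVertexCover_iff_forall_list (by norm_num)]
  intro l hchain hnodup hlen
  match l, hlen with
  | [x, y, z, v, w], _ =>
    exfalso
    have hthree := (isPathVertexCover_iff_forall_list (by norm_num)).1
      (isPathVertexCover_three_starWithTriangle c a b)
    have hleft := hthree [x, y, z] (by grind) (by grind) rfl
    have hright := hthree [z, v, w] (by grind) (by grind) rfl
    have hz : z = c := by grind
    have hxy : s(x, y) = s(a, b) := by grind [starWithTriangle_adj]
    have hvw : s(v, w) = s(a, b) := by grind [starWithTriangle_adj]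
    have hx : x = v ∨ x = w := by grind
    grind

theorem pathNum_starWithTriangle_le [Fintype V] {k : ℕ} (hk : 2 ≤ k) :
    (starWithTriangle c a b).pathNum k ≤ 4 / k := by
  classical
  obtain rfl | ⟨hk₃, hk₄⟩ | hk₅ : k = 2 ∨ (3 ≤ k ∧ k ≤ 4) ∨ 5 ≤ k := by omega
  · have hcover := isPathVertexCover_two_starWithTriangle c a b
    exact (pathNum_le_card (S := {c, a}) (by simpa using hcover)).trans Finset.card_le_two
  · have hcover := isPathVertexCover_of_le (by norm_num) hk₃
      (isPathVertexCover_three_starWithTriangle c a b)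
    calc (starWithTriangle c a b).pathNum k
        ≤ 1 := pathNum_le_card (S := {c}) (by simpa using hcover)
      _ ≤ 4 / k := Nat.div_pos hk₄ (by omega)
  · have hcover := isPathVertexCover_of_le (by norm_num) hk₅
      (isPathVertexCover_five_starWithTriangle c a b)
    exact (pathNum_le_card (S := ∅) (by simpa using hcover)).trans (Nat.zero_le _)

theorem pathNum_starWithTriangle_eq_pathNum_extendedStar [Fintype V] (h : [d, c, a, b].Nodup)
    {k : ℕ} (hk : 1 ≤ k) : (starWithTriangle c a b).pathNum k = (extendedStar c a b).pathNum k := by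
  obtain rfl | hk₂ := hk.eq_or_lt
  · simp only [pathNum_one]
  refine le_antisymm ?_ (pathNum_mono sdiff_le)
  calc (starWithTriangle c a b).pathNum k
      ≤ 4 / k := pathNum_starWithTriangle_le hk₂
    _ ≤ (extendedStar c a b).pathNum k := length_div_le_pathNum (isChain_extendedStar h) h

end Star

end PathSequence

open PathSequence in
theorem exists_nonisomorphic_same_path_sequence_general {V : Type*} [Fintype V]
    (hV : 4 ≤ Fintype.card V) :
    ∃ G H : SimpleGraph V, G.Connected ∧ H.Connected ∧
      ¬ Nonempty (G ≃g H) ∧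
      ∀ k : ℕ, 1 ≤ k → G.pathNum k = H.pathNum k := by
  obtain ⟨f⟩ : Nonempty (Fin 4 ↪ V) :=
    Function.Embedding.nonempty_of_card_le (by simpa using hV)
  have hnodup : [f 0, f 1, f 2, f 3].Nodup := by simp
  have hlt := extendedStar_lt (c := f 1) (a := f 2) (b := f 3) (by simp)
  have hconn : (extendedStar (f 1) (f 2) (f 3)).Connected :=
    connected_extendedStar (by simp) (by simp) (by simp)
  exact ⟨_, _, hconn.mono hlt.le, hconn, not_nonempty_iso_of_lt hlt,
    fun _ => pathNum_starWithTriangle_eq_pathNum_extendedStar hnodup⟩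

theorem exists_nonisomorphic_same_path_sequence (n : ℕ) (hn : 4 ≤ n) :
    ∃ G H : SimpleGraph (Fin n), G.Connected ∧ H.Connected ∧
      ¬ Nonempty (G ≃g H) ∧
      ∀ k : ℕ, 1 ≤ k → k ≤ n → G.pathNum k = H.pathNum k := by
  obtain ⟨G, H, hG, hH, hiso, hψ⟩ :=
    exists_nonisomorphic_same_path_sequence_general (V := Fin n) (by simpa using hn)
  exact ⟨G, H, hG, hH, hiso, fun k hk _ => hψ k hk⟩
end

section
/- Let G = (V,E) be a connected simple graph on n ≥ 4 vertices with V = {p_1, …, p_{n−1}, q}, where p_1 − p_2 − ⋯ − p_{n−1} is a path in G, and let N(q) = {p_{i_1}, …, p_{i_t}} be the neighbourhood of q. If ψ_{n−1}(G) = 2 and ψ_n(G) = 0, then: (3) p_1p_{i_j+1} ∉ E and p_{n−1}p_{i_j−1} ∉ E for all j ∈ {1, …, t}; (4) p_1p_{i_j−1} ∉ E for all j with i_j > min{i_1, …, i_t}, and p_{n−1}p_{i_j+1} ∉ E for all j with i_j < max{i_1, …, i_t}. -/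
/-!
Let `l` be a path avoiding `q` such that `G` has no path on one more vertex. Each forbidden edge
would allow rearranging `q :: l` into a path. If `l[0]` were adjacent to `l[i + 1]` with `l[i]` a
neighbour of `q`, then reversing the initial segment `l[0], …, l[i]` (a Pósa rotation) would turn
`l` into a path starting at `l[i]`, to which `q` could be prepended. If `l[0]` were adjacent to
`l[j - 1]` with `l[i]` and `l[j]` neighbours of `q`, `i < j`, then the segment `l[0], …, l[j - 1]`
would close up to a cycle, which can be cut open so as to end at `l[i]`, and `q` would bridge
`l[i]` to `l[j]`. The statements about the other end of `l` follow by reversing `l`.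
-/

section Chains

variable {α : Type*} {R : α → α → Prop} {l : List α}

theorem isChain_reverse_take_append_drop [Std.Symm R] (hl : l.IsChain R) {i : ℕ}
    (hi : i + 1 < l.length) (h : R l[0] l[i + 1]) :
    ((l.take (i + 1)).reverse ++ l.drop (i + 1)).IsChain R := by
  have hrev : (l.take (i + 1)).reverse.IsChain R :=
    List.isChain_reverse.mpr ((hl.take _).imp fun _ _ => symm_of R)
  refine List.isChain_append.mpr ⟨hrev, hl.drop _, ?_⟩
  simpa [List.head?_take, List.head?_eq_getElem?, hi, Nat.zero_lt_of_lt hi] using h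

theorem isChain_drop_append_take (hl : l.IsChain R) (hpos : 0 < l.length)
    (h : R l[l.length - 1] l[0]) (i : ℕ) : (l.drop i ++ l.take i).IsChain R := by
  refine List.isChain_append.mpr ⟨hl.drop i, hl.take i, ?_⟩
  simp only [List.getLast?_drop, List.head?_take]
  grind [List.head?_eq_getElem?]

end Chains

theorem pathNum_eq_zero_iff {V : Type*} [Fintype V] {G : SimpleGraph V} {k : ℕ} :
    G.pathNum k = 0 ↔ G.IsPathVertexCover k ∅ := by
  have huniv : G.IsPathVertexCover k ↑(Finset.univ : Finset V) :=
    fun u _ w _ _ => ⟨u, w.start_mem_support, by simp⟩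
  -- A cover has to be exhibited because `sInf ∅ = 0`.
  have hne : {m : ℕ | ∃ S : Finset V, G.IsPathVertexCover k ↑S ∧ S.card = m} ≠ ∅ :=
    Set.Nonempty.ne_empty ⟨_, Finset.univ, huniv, rfl⟩
  simp [SimpleGraph.pathNum, Nat.sInf_eq_zero, hne]

/-- `l` lists in order the vertices of a path of `G` that avoids `q`, and `G` has no path on one
more vertex; the latter is encoded as the empty set covering all paths on `l.length + 1` vertices,
so that it applies to rearrangements of `q :: l`. -/
structure IsMaximumPathAvoiding {V : Type*} (G : SimpleGraph V) (q : V) (l : List V) : Prop where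
  isChain : l.IsChain G.Adj
  nodup_cons : (q :: l).Nodup
  isPathVertexCover_empty : G.IsPathVertexCover (l.length + 1) ∅

namespace IsMaximumPathAvoiding

open scoped List

variable {V : Type*} {G : SimpleGraph V} {q : V} {l : List V}

theorem reverse (hl : IsMaximumPathAvoiding G q l) : IsMaximumPathAvoiding G q l.reverse where
  isChain := List.isChain_reverse.mpr (hl.isChain.imp fun _ _ => .symm)
  nodup_cons := by simpa using hl.nodup_cons
  isPathVertexCover_empty := by simpa using hl.isPathVertexCover_empty

theorem not_isChain_of_perm_cons (hl : IsMaximumPathAvoiding G q l) {l' : List V}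
    (hperm : l' ~ q :: l) : ¬ l'.IsChain G.Adj := by
  intro hchain
  have hne : l' ≠ [] := by rintro rfl; simp at hperm
  have hsupport := SimpleGraph.Walk.support_ofSupport hne hchain
  have hpath : (SimpleGraph.Walk.ofSupport l' hne hchain).IsPath :=
    .mk' (by rw [hsupport]; exact hperm.nodup_iff.mpr hl.nodup_cons)
  obtain ⟨_, -, hmem⟩ := hl.isPathVertexCover_empty _ hpath
    (by rw [hsupport, hperm.length_eq, List.length_cons])
  exact hmem

theorem not_adj_head_of_adj_pred (hl : IsMaximumPathAvoiding G q l) {i : ℕ}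
    (hi : i + 1 < l.length) (hqi : G.Adj q l[i]) : ¬ G.Adj l[0] l[i + 1] := by
  intro hend
  have := G.symm
  have hrot : ((l.take (i + 1)).reverse ++ l.drop (i + 1)).IsChain G.Adj :=
    isChain_reverse_take_append_drop hl.isChain hi hend
  have hperm : (l.take (i + 1)).reverse ++ l.drop (i + 1) ~ l := by
    simpa only [List.take_append_drop] using
      (List.reverse_perm (l.take (i + 1))).append_right (l.drop (i + 1))
  refine hl.not_isChain_of_perm_cons (hperm.cons q) (List.isChain_cons.mpr ⟨?_, hrot⟩)
  simpa [List.getLast?_take, Nat.lt_of_succ_lt hi] using hqi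

theorem not_adj_head_of_adj_of_adj_succ (hl : IsMaximumPathAvoiding G q l) {i j : ℕ} (hij : i < j)
    (hj : j < l.length) (hqi : G.Adj q l[i]) (hqj : G.Adj q l[j]) : ¬ G.Adj l[0] l[j - 1] := by
  intro hend
  have hpos : 0 < (l.take j).length := by grind
  have hclosed : G.Adj (l.take j)[(l.take j).length - 1] (l.take j)[0] := by grind [hend.symm]
  have hcut : ((l.take j).drop (i + 1) ++ (l.take j).take (i + 1)).IsChain G.Adj :=
    isChain_drop_append_take (hl.isChain.take j) hpos hclosed (i + 1)
  have hperm : ((l.take j).drop (i + 1) ++ (l.take j).take (i + 1)) ++ q :: l.drop j ~ q :: l := by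
    calc
      _ ~ ((l.take j).take (i + 1) ++ (l.take j).drop (i + 1)) ++ q :: l.drop j :=
        List.perm_append_comm.append_right _
      _ = l.take j ++ q :: l.drop j := by rw [List.take_append_drop]
      _ ~ q :: (l.take j ++ l.drop j) := List.perm_middle
      _ = q :: l := by rw [List.take_append_drop]
  refine hl.not_isChain_of_perm_cons hperm <| List.isChain_append.mpr
    ⟨hcut, List.isChain_cons.mpr ⟨?_, hl.isChain.drop j⟩, ?_⟩
  · simpa [hj] using hqj
  · simp only [List.getLast?_append, List.getLast?_take]
    grind [hqi.symm]

theorem not_adj_getLast_of_adj_succ (hl : IsMaximumPathAvoiding G q l) {i : ℕ}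
    (hi : i + 1 < l.length) (hqi : G.Adj q l[i + 1]) : ¬ G.Adj l[l.length - 1] l[i] := by
  have hrev := hl.reverse.not_adj_head_of_adj_pred (i := l.length - 2 - i) (by grind) (by grind)
  grind

theorem not_adj_getLast_of_adj_of_adj_pred (hl : IsMaximumPathAvoiding G q l) {i j : ℕ}
    (hij : i < j) (hj : j < l.length) (hqi : G.Adj q l[i]) (hqj : G.Adj q l[j]) :
    ¬ G.Adj l[l.length - 1] l[i + 1] := by
  have hrev := hl.reverse.not_adj_head_of_adj_of_adj_succ (i := l.length - 1 - j)
    (j := l.length - 1 - i) (by grind) (by grind) (by grind) (by grind)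
  grind

end IsMaximumPathAvoiding

theorem structure_of_no_hamiltonian_path₂_general {V : Type*} (G : SimpleGraph V) (k : ℕ)
    (p : Fin k → V) (q : V) (hinj : Function.Injective p) (hq : q ∉ Set.range p)
    (hpath : ∀ (i : ℕ) (h : i + 1 < k), G.Adj (p ⟨i, by omega⟩) (p ⟨i + 1, h⟩))
    (hcov : G.IsPathVertexCover (k + 1) ∅) :
    (∀ (a : ℕ) (ha : a < k), G.Adj q (p ⟨a, ha⟩) →
      (∀ ha' : a + 1 < k, ¬ G.Adj (p ⟨0, by omega⟩) (p ⟨a + 1, ha'⟩)) ∧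
      (1 ≤ a → ¬ G.Adj (p ⟨k - 1, by omega⟩) (p ⟨a - 1, by omega⟩))) ∧
    (∀ (a b : ℕ) (ha : a < k) (hb : b < k) (_ : a < b),
      G.Adj q (p ⟨a, ha⟩) → G.Adj q (p ⟨b, hb⟩) →
      ¬ G.Adj (p ⟨0, by omega⟩) (p ⟨b - 1, by omega⟩) ∧
      ¬ G.Adj (p ⟨k - 1, by omega⟩) (p ⟨a + 1, by omega⟩)) := by
  have hl : IsMaximumPathAvoiding G q (List.ofFn p) :=
    { isChain := List.isChain_iff_getElem.mpr <| by simpa using hpath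
      nodup_cons := by simpa [List.nodup_ofFn, hinj] using hq
      isPathVertexCover_empty := by simpa using hcov }
  refine ⟨fun a ha hqa => ⟨fun ha' => ?_, fun hpos => ?_⟩, fun a b ha hb hab hqa hqb => ⟨?_, ?_⟩⟩
  · simpa [ha'] using hl.not_adj_head_of_adj_pred (i := a) (by simpa) (by simpa)
  · obtain ⟨c, rfl⟩ := Nat.exists_eq_add_of_le' hpos
    simpa using hl.not_adj_getLast_of_adj_succ (i := c) (by simpa) (by simpa)
  · simpa using hl.not_adj_head_of_adj_of_adj_succ hab (by simpa) (by simpa) (by simpa)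
  · simpa using hl.not_adj_getLast_of_adj_of_adj_pred hab (by simpa) (by simpa) (by simpa)

/-- Lemma 9 (3)–(4) of the paper. The vertices of `G` are `p 0, …, p (n-2)`
(the paper's `p_1, …, p_{n-1}`) together with `q`, and `p 0 − p 1 − ⋯ − p (n-2)`
is a path in `G`.  The neighbours of `q` are the vertices `p a` with `G.Adj q (p a)`. -/
theorem structure_of_no_hamiltonian_path₂ {V : Type*} [Fintype V] (G : SimpleGraph V)
    (n : ℕ) (hn : 4 ≤ n) (hcard : Fintype.card V = n)
    (p : Fin (n - 1) → V) (q : V)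
    (hinj : Function.Injective p) (hq : q ∉ Set.range p)
    (hpath : ∀ (i : ℕ) (h : i + 1 < n - 1),
      G.Adj (p ⟨i, by omega⟩) (p ⟨i + 1, h⟩))
    (hconn : G.Connected)
    (h1 : G.pathNum (n - 1) = 2) (h2 : G.pathNum n = 0) :
    -- (3)
    (∀ (a : ℕ) (ha : a < n - 1), G.Adj q (p ⟨a, ha⟩) →
      (∀ ha' : a + 1 < n - 1, ¬ G.Adj (p ⟨0, by omega⟩) (p ⟨a + 1, ha'⟩)) ∧
      (1 ≤ a → ¬ G.Adj (p ⟨n - 2, by omega⟩) (p ⟨a - 1, by omega⟩))) ∧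
    -- (4)
    (∀ (a b : ℕ) (ha : a < n - 1) (hb : b < n - 1) (hab : a < b)
      (hqa : G.Adj q (p ⟨a, ha⟩)) (hqb : G.Adj q (p ⟨b, hb⟩)),
      ¬ G.Adj (p ⟨0, by omega⟩) (p ⟨b - 1, by omega⟩) ∧
      ¬ G.Adj (p ⟨n - 2, by omega⟩) (p ⟨a + 1, by omega⟩)) := by
  have hcov : G.IsPathVertexCover (n - 1 + 1) ∅ := by
    rwa [Nat.sub_add_cancel (by omega), ← pathNum_eq_zero_iff]
  exact structure_of_no_hamiltonian_path₂_general G (n - 1) p q hinj hq hpath hcov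
end

section
/- Let G be a simple graph on n vertices with 3 ≤ n ≤ 7 and let k be an integer with 2 ≤ k < n. If ψ_k(G) = n − k + 1, then ψ_j(G) = n − j + 1 for every j with k < j ≤ n. -/
/-!
A vertex set of size `n - k` is the complement of a `k`-set, so `ψ_k(G)` takes its largest possible
value `n - k + 1` exactly when every `k`-set of vertices carries a path. If this property failed to
pass from `k` to `k + 1`, some `(k + 1)`-set would be hypotraceable: not the vertex set of a path,
although each of its vertex-deleted subsets is. In a hypotraceable set `T` with at least three
elements every vertex `v` has at least three neighbours: if `x` is a neighbour of `v`, then `v` is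
not an end of a path through `T \ {x}`, as `x` could be appended there, so two further neighbours
surround `v` on it. On the other hand `v` cannot be inserted into a path through `T \ {v}`, so its
neighbours are neither ends of this path nor consecutive on it, and twice their number is less than
`|T| - 1`. Hence `|T| ≥ 8`.
-/

open Finset

section List

variable {α : Type*} {p : α → Bool}

theorem exists_append_cons_of_length_lt_two_mul_countP {l : List α}
    (h : l.length < 2 * l.countP p) :
    ∃ s a t, l = s ++ a :: t ∧ p a ∧ ∀ x ∈ t.head?, p x := by
  induction l using List.twoStepInduction with
  | nil => simp at h
  | singleton a =>
    have ha : p a := by by_contra ha; simp [ha] at h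
    exact ⟨[], a, [], rfl, ha, by simp⟩
  | cons_cons a b l ih_drop_two ih_drop_one =>
    by_cases ha : p a
    · by_cases hb : p b
      · exact ⟨[], a, b :: l, rfl, ha, by simpa using hb⟩
      · have hl : l.length < 2 * l.countP p := by
          rw [List.countP_cons_of_pos ha, List.countP_cons_of_neg hb, List.length_cons,
            List.length_cons] at h
          omega
        obtain ⟨s, c, t, rfl, hc, ht⟩ := ih_drop_two hl
        exact ⟨a :: b :: s, c, t, rfl, hc, ht⟩
    · have hbl : (b :: l).length < 2 * (b :: l).countP p := by
        rw [List.countP_cons_of_neg ha, List.length_cons] at h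
        omega
      obtain ⟨s, c, t, hst, hc, ht⟩ := ih_drop_one b hbl
      exact ⟨a :: s, c, t, by rw [hst, List.cons_append], hc, ht⟩

theorem exists_append_of_length_le_two_mul_countP {l : List α}
    (h : l.length ≤ 2 * l.countP p) :
    ∃ s t, l = s ++ t ∧ (∀ x ∈ s.getLast?, p x) ∧ ∀ x ∈ t.head?, p x := by
  rcases l with _ | ⟨a, l⟩
  · exact ⟨[], [], rfl, by simp, by simp⟩
  by_cases ha : p a
  · exact ⟨[], a :: l, rfl, by simp, by simpa using ha⟩
  · rw [List.countP_cons_of_neg ha, List.length_cons] at h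
    obtain ⟨s, c, t, rfl, hc, ht⟩ := exists_append_cons_of_length_lt_two_mul_countP h
    exact ⟨a :: s ++ [c], t, by simp, by rw [List.getLast?_concat]; simpa using hc, ht⟩

end List

section Traceable

variable {V : Type*} {G : SimpleGraph V} {T : Finset V} {v x : V}

/-- `T` is the vertex set of a path of `G`. The path is encoded as the list of its vertices, so
that the empty set is traceable. -/
def TraceableOn (G : SimpleGraph V) (T : Finset V) : Prop :=
  ∃ l : List V, (l : Multiset V) = T.val ∧ l.IsChain G.Adj

theorem mem_iff_mem_of_coe_eq_val {l : List V} (h : (l : Multiset V) = T.val) :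
    x ∈ l ↔ x ∈ T := by
  rw [← mem_val, ← h, Multiset.mem_coe]

theorem nodup_of_coe_eq_val {l : List V} (h : (l : Multiset V) = T.val) : l.Nodup :=
  Multiset.coe_nodup.1 (h ▸ T.nodup)

theorem length_eq_card_of_coe_eq_val {l : List V} (h : (l : Multiset V) = T.val) :
    l.length = #T :=
  congrArg Multiset.card h

namespace TraceableOn

theorem of_append [DecidableEq V] {s t : List V} (hv : v ∈ T)
    (hval : (↑(s ++ t) : Multiset V) = (T.erase v).val) (hchain : (s ++ t).IsChain G.Adj)
    (hs : ∀ x ∈ s.getLast?, G.Adj v x) (ht : ∀ x ∈ t.head?, G.Adj v x) : TraceableOn G T := by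
  refine ⟨s ++ v :: t, ?_, ?_⟩
  · rw [Multiset.coe_eq_coe.2 List.perm_middle, ← Multiset.cons_coe, hval, erase_val,
      Multiset.cons_erase hv]
  · rw [List.isChain_append] at hchain ⊢
    refine ⟨hchain.1, List.isChain_cons.2 ⟨ht, hchain.2.1⟩, fun x hx y hy => ?_⟩
    obtain rfl : v = y := by simpa using hy
    exact (hs x hx).symm

theorem exists_adj (h : TraceableOn G T) (hT : 1 < #T) (hv : v ∈ T) : ∃ w ∈ T, G.Adj v w := by
  obtain ⟨l, hval, hchain⟩ := h
  have hmem {x} : x ∈ l ↔ x ∈ T := mem_iff_mem_of_coe_eq_val hval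
  have hlen := length_eq_card_of_coe_eq_val hval
  obtain ⟨s, t, rfl⟩ := List.append_of_mem (hmem.2 hv)
  rw [List.isChain_append, List.isChain_cons] at hchain
  obtain ⟨-, ⟨hnext, -⟩, hprev⟩ := hchain
  rcases t with _ | ⟨b, t⟩
  · rcases List.eq_nil_or_concat s with rfl | ⟨s, a, rfl⟩
    · simp only [List.nil_append, List.length_singleton] at hlen
      omega
    · exact ⟨a, hmem.1 (by simp), (hprev a (by simp) v (by simp)).symm⟩
  · exact ⟨b, hmem.1 (by simp), hnext b (by simp)⟩

variable [DecidableEq V] [DecidableRel G.Adj]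

theorem two_mul_card_adj_lt_of_not_traceableOn (h : TraceableOn G (T.erase v))
    (hT : ¬ TraceableOn G T) (hv : v ∈ T) : 2 * #{w ∈ T | G.Adj v w} < #(T.erase v) := by
  obtain ⟨l, hval, hchain⟩ := h
  have hcount : l.countP (G.Adj v ·) = #{w ∈ T | G.Adj v w} := by
    rw [← Multiset.coe_countP, hval, Multiset.countP_eq_card_filter, ← filter_val, card_val,
      filter_erase, erase_eq_of_notMem (by simp)]
  rw [← hcount, ← length_eq_card_of_coe_eq_val hval]
  by_contra! hle
  obtain ⟨s, t, rfl, hs, ht⟩ := exists_append_of_length_le_two_mul_countP hle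
  exact hT (of_append hv hval hchain (by simpa using hs) (by simpa using ht))

theorem one_lt_card_adj_of_not_traceableOn (h : TraceableOn G (T.erase x)) (hT : ¬ TraceableOn G T)
    (hx : x ∈ T) (hv : v ∈ T.erase x) (hvx : G.Adj v x) :
    1 < #{w ∈ T.erase x | G.Adj v w} := by
  obtain ⟨l, hval, hchain⟩ := h
  have hmem {y} : y ∈ l ↔ y ∈ T.erase x := mem_iff_mem_of_coe_eq_val hval
  obtain ⟨s, t, rfl⟩ := List.append_of_mem (hmem.2 hv)
  rcases List.eq_nil_or_concat s with rfl | ⟨s, a, rfl⟩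
  · exact absurd (of_append (s := []) hx hval hchain (by simp) (by simpa using hvx.symm)) hT
  rcases t with _ | ⟨b, t⟩
  · exact absurd (of_append (t := []) hx (by rwa [List.append_nil]) (by rwa [List.append_nil])
      (by simpa using hvx.symm) (by simp)) hT
  have hab : a ≠ b := by
    have hnodup := nodup_of_coe_eq_val hval
    grind
  rw [List.isChain_append, List.isChain_cons] at hchain
  obtain ⟨-, ⟨hnext, -⟩, hprev⟩ := hchain
  have ha : G.Adj v a := (hprev a (by simp) v (by simp)).symm
  have hb : G.Adj v b := hnext b (by simp)
  exact one_lt_card.2 ⟨a, mem_filter.2 ⟨hmem.1 (by simp), ha⟩,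
    b, mem_filter.2 ⟨hmem.1 (by simp), hb⟩, hab⟩

end TraceableOn

/-- The subgraph of `G` induced on `T` is hypotraceable: `T` is not the vertex set of a path, but
becomes one on deleting any of its vertices. Two nonadjacent vertices are not excluded. -/
structure HypotraceableOn [DecidableEq V] (G : SimpleGraph V) (T : Finset V) : Prop where
  not_traceableOn : ¬ TraceableOn G T
  traceableOn_erase : ∀ v ∈ T, TraceableOn G (T.erase v)

namespace HypotraceableOn

variable [DecidableEq V]

theorem exists_adj (h : HypotraceableOn G T) (hT : 3 ≤ #T) (hv : v ∈ T) :
    ∃ w ∈ T, G.Adj v w := by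
  obtain ⟨u, hu, huv⟩ := exists_mem_ne (s := T) (by omega) v
  have hcard : 1 < #(T.erase u) := by
    rw [card_erase_of_mem hu]
    omega
  obtain ⟨w, hw, hvw⟩ :=
    (h.traceableOn_erase u hu).exists_adj hcard (mem_erase.2 ⟨huv.symm, hv⟩)
  exact ⟨w, mem_of_mem_erase hw, hvw⟩

theorem three_le_card_adj [DecidableRel G.Adj] (h : HypotraceableOn G T) (hT : 3 ≤ #T)
    (hv : v ∈ T) : 3 ≤ #{w ∈ T | G.Adj v w} := by
  obtain ⟨x, hx, hvx⟩ := h.exists_adj hT hv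
  have hlt := (h.traceableOn_erase x hx).one_lt_card_adj_of_not_traceableOn h.not_traceableOn hx
    (mem_erase.2 ⟨hvx.ne, hv⟩) hvx
  rw [filter_erase] at hlt
  have hx_mem : x ∈ {w ∈ T | G.Adj v w} := mem_filter.2 ⟨hx, hvx⟩
  have := card_erase_add_one hx_mem
  omega

theorem eight_le_card (h : HypotraceableOn G T) (hT : 3 ≤ #T) : 8 ≤ #T := by
  classical
  obtain ⟨v, hv⟩ : T.Nonempty := card_pos.1 (by omega)
  have hlower := h.three_le_card_adj hT hv
  have hupper :=
    (h.traceableOn_erase v hv).two_mul_card_adj_lt_of_not_traceableOn h.not_traceableOn hv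
  rw [card_erase_of_mem hv] at hupper
  omega

end HypotraceableOn

theorem traceableOn_of_forall_card_eq {k j : ℕ} (hk : 2 ≤ k) (hkj : k ≤ j) (hj : j ≤ 7)
    (h : ∀ T : Finset V, #T = k → TraceableOn G T) (T : Finset V) (hT : #T = j) :
    TraceableOn G T := by
  classical
  induction j, hkj using Nat.le_induction generalizing T with
  | base => exact h T hT
  | succ j hkj ih =>
    by_contra hnot
    have hhypo : HypotraceableOn G T :=
      ⟨hnot, fun v hv => ih (by omega) _ (by rw [card_erase_of_mem hv, hT, Nat.add_sub_cancel])⟩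
    have := hhypo.eight_le_card (by omega)
    omega

theorem isPathVertexCover_iff_traceableOn {k : ℕ} (hk : k ≠ 0) {S : Set V} :
    G.IsPathVertexCover k S ↔
      ∀ T : Finset V, #T = k → TraceableOn G T → ∃ x ∈ T, x ∈ S := by
  constructor
  · rintro h T hT ⟨l, hval, hchain⟩
    have hlen : l.length = k := (length_eq_card_of_coe_eq_val hval).trans hT
    have hne : l ≠ [] := List.ne_nil_of_length_pos (by omega)
    obtain ⟨x, hx, hxS⟩ := h (.ofSupport l hne hchain)
      ((SimpleGraph.Walk.isPath_def _).2 (by simpa using nodup_of_coe_eq_val hval))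
      (by rwa [SimpleGraph.Walk.support_ofSupport])
    exact ⟨x, (mem_iff_mem_of_coe_eq_val hval).1 (by simpa using hx), hxS⟩
  · intro h u w p hp hlen
    obtain ⟨x, hx, hxS⟩ := h ⟨p.support, hp.support_nodup⟩ hlen
      ⟨p.support, rfl, p.isChain_adj_support⟩
    exact ⟨x, hx, hxS⟩

section PathNum

variable [Fintype V] {k : ℕ}

theorem pathNum_le_iff {m : ℕ} : G.pathNum k ≤ m ↔
    ∃ S : Finset V, G.IsPathVertexCover k ↑S ∧ #S ≤ m := by
  constructor
  · intro h
    have huniv : G.IsPathVertexCover k ↑(univ : Finset V) := fun u _ p _ _ =>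
      ⟨u, p.start_mem_support, by simp⟩
    obtain ⟨S, hS, hcard⟩ := Nat.sInf_mem
      (s := {m : ℕ | ∃ S : Finset V, G.IsPathVertexCover k ↑S ∧ #S = m}) ⟨_, univ, huniv, rfl⟩
    exact ⟨S, hS, hcard.trans_le h⟩
  · rintro ⟨S, hS, hcard⟩
    have hle : G.pathNum k ≤ #S := Nat.sInf_le ⟨S, hS, rfl⟩
    exact hle.trans hcard

theorem pathNum_le_card_sub_add_one (hk : k ≠ 0) :
    G.pathNum k ≤ Fintype.card V - k + 1 := by
  classical
  obtain ⟨S, -, hS⟩ := exists_subset_card_eq (s := (univ : Finset V))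
    (n := min (Fintype.card V) (Fintype.card V - k + 1)) (min_le_left _ _)
  refine pathNum_le_iff.2
    ⟨S, (isPathVertexCover_iff_traceableOn hk).2 fun T hT _ => ?_, hS.trans_le (min_le_right _ _)⟩
  by_contra! hdisj
  have hsum := card_union_of_disjoint (disjoint_left.2 hdisj)
  have := card_le_univ (T ∪ S)
  omega

theorem pathNum_le_card_sub_iff (hk : k ≠ 0) (hkn : k ≤ Fintype.card V) :
    G.pathNum k ≤ Fintype.card V - k ↔ ∃ T : Finset V, #T = k ∧ ¬ TraceableOn G T := by
  classical
  simp only [pathNum_le_iff, isPathVertexCover_iff_traceableOn hk, mem_coe]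
  constructor
  · rintro ⟨S, hS, hcard⟩
    obtain ⟨T, hTS, hT⟩ := exists_subset_card_eq (s := Sᶜ) (n := k) (by rw [card_compl]; omega)
    refine ⟨T, hT, fun htrace => ?_⟩
    obtain ⟨x, hxT, hxS⟩ := hS T hT htrace
    exact mem_compl.1 (hTS hxT) hxS
  · rintro ⟨T, hT, hnot⟩
    refine ⟨Tᶜ, fun U hU htrace => ?_, by rw [card_compl, hT]⟩
    by_contra! hdisj
    have hUT : U ⊆ T := fun x hx => by simpa using hdisj x hx
    exact hnot (eq_of_subset_of_card_le hUT (by omega) ▸ htrace)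

theorem pathNum_eq_card_sub_add_one_iff (hk : k ≠ 0) (hkn : k ≤ Fintype.card V) :
    G.pathNum k = Fintype.card V - k + 1 ↔ ∀ T : Finset V, #T = k → TraceableOn G T := by
  rw [← (pathNum_le_card_sub_add_one hk).ge_iff_eq, Nat.succ_le_iff, ← not_le,
    pathNum_le_card_sub_iff hk hkn]
  simp only [not_exists, not_and, not_not]

end PathNum

end Traceable

theorem psi_cascade_small_graphs_general {V : Type*} [Fintype V] (G : SimpleGraph V) {k j : ℕ}
    (hk2 : 2 ≤ k) (hkj : k ≤ j) (hjn : j ≤ Fintype.card V) (hj7 : j ≤ 7)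
    (h : G.pathNum k = Fintype.card V - k + 1) :
    G.pathNum j = Fintype.card V - j + 1 := by
  rw [pathNum_eq_card_sub_add_one_iff (by omega) (hkj.trans hjn)] at h
  rw [pathNum_eq_card_sub_add_one_iff (by omega) hjn]
  exact traceableOn_of_forall_card_eq hk2 hkj hj7 h

theorem psi_cascade_small_graphs {V : Type*} [Fintype V] (G : SimpleGraph V)
    (hn3 : 3 ≤ Fintype.card V) (hn7 : Fintype.card V ≤ 7)
    (k : ℕ) (hk2 : 2 ≤ k) (hkn : k < Fintype.card V)
    (h : G.pathNum k = Fintype.card V - k + 1) :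
    ∀ j : ℕ, k < j → j ≤ Fintype.card V →
      G.pathNum j = Fintype.card V - j + 1 :=
  fun _ hkj hjn => psi_cascade_small_graphs_general G hk2 hkj.le hjn (hjn.trans hn7) h
end
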